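/- There exists an absolute constant C > 0 with the following property. Let w : Π → ℝ be measurable, N ≥ 0, I ≥ 0, and suppose |w(r̄, s̄)| ≤ N r̄ s̄ for almost every (r̄, s̄) ∈ Π and ∫∫_Π (r̄² + s̄²) |w(r̄, s̄)| dr̄ ds̄ = I < ∞. Then for every (r, s) ∈ Π with r² + s² = 1, the integrals defining u^r[w](r, s) and u^s[w](r, s) converge absolutely and |u^r[w](r, s)| ≤ C I^{1/2} N^{1/2} and |u^s[w](r, s)| ≤ C I^{1/2} N^{1/2}. -/

import Mathlib

open MeasureTheory Real

/-- `X₋₋ = (r−r̄)² + (s−s̄)² + 2rr̄(1−cos θ̄) + 2ss̄(1−cos φ̄)`. -/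
noncomputable def Xmm (r s rb sb θ φ : ℝ) : ℝ :=
  (r - rb) ^ 2 + (s - sb) ^ 2 + 2 * r * rb * (1 - Real.cos θ) + 2 * s * sb * (1 - Real.cos φ)

/-- The Biot–Savart kernel `F^r` of the bi-rotational Euler flow. -/
noncomputable def Fr (r s rb sb : ℝ) : ℝ :=
  (2 / Real.pi ^ 2) * ∫ θ in (0:ℝ)..Real.pi, ∫ φ in (0:ℝ)..Real.pi,
    rb * sb * Real.cos θ * (sb - s * Real.cos φ) / (Xmm r s rb sb θ φ) ^ 2

/-- `F^s(r,s,r̄,s̄) = F^r(s,r,s̄,r̄)`. -/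
noncomputable def Fs (r s rb sb : ℝ) : ℝ := Fr s r sb rb

/-- The quadrant `Π = {(r,s) : r ≥ 0, s ≥ 0}`. -/
def quadrant : Set (ℝ × ℝ) := Set.Ici (0:ℝ) ×ˢ Set.Ici (0:ℝ)

/-- `u^r[w](r,s) = −∫∫_Π F^r(r,s,r̄,s̄) w(r̄,s̄) ds̄ dr̄`. -/
noncomputable def uR (w : ℝ × ℝ → ℝ) (r s : ℝ) : ℝ :=
  -∫ p in quadrant, Fr r s p.1 p.2 * w p

/-- `u^s[w](r,s) = ∫∫_Π F^s(r,s,r̄,s̄) w(r̄,s̄) ds̄ dr̄`. -/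
noncomputable def uS (w : ℝ × ℝ → ℝ) (r s : ℝ) : ℝ :=
  ∫ p in quadrant, Fs r s p.1 p.2 * w p

/-!
As `1 - cos θ ≥ 2 θ² / π²`, we have `√X₋₋ ≥ (d + r̄ θ + s̄ φ) / 16`, where `d` is the distance
from `(r, s)` to `(r̄, s̄)`. As also `|s̄ - s cos φ| ≤ √X₋₋`, the integrand of `F^r` is at most a
constant times `r̄ s̄ / (d + r̄ θ + s̄ φ)³`. Each of the integrals over `φ` and `θ` lowers the
exponent by one and cancels a factor `s̄` or `r̄`, so that `|F^r| ≲ 1 / d`.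

It remains to bound `∫ |w| / |p - x|` in the plane. For `l > 0`, the part where `|p|² |p - x| ≥ l`
is at most `l⁻¹ ∫ |p|² |w|`. Elsewhere either `|p|³ < 3 l`, or `|p|` is comparable to `|x|` and
`|p - x| ≲ l / |x|²`; both regions contribute `O(N l)`. Optimising in `l` gives the geometric mean.
All of this is invariant under dilations, so the point `x` may be anywhere, and any norm will do.
-/

open Metric Module

/-! ### An interpolation inequality for the inverse distance in the plane -/

lemma le_two_mul_sqrt_of_forall_le_div_add_mul {x a b : ℝ} (ha : 0 ≤ a) (hb : 0 ≤ b)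
    (h : ∀ l, 0 < l → x ≤ a / l + b * l) : x ≤ 2 * √(a * b) := by
  rcases le_or_gt x 0 with hx | hx
  · exact hx.trans (by positivity)
  have hquad : ∀ l, 0 ≤ b * (l * l) + -x * l + a := fun l => by
    rcases le_or_gt l 0 with hl | hl
    · nlinarith [mul_nonneg hb (mul_self_nonneg l)]
    · have := mul_le_mul_of_nonneg_right (h l hl) hl.le
      rw [add_mul, div_mul_cancel₀ a hl.ne'] at this
      linarith
  have hdiscrim := discrim_le_zero hquad
  rw [discrim] at hdiscrim
  have hsq : x / 2 ≤ √(a * b) := le_sqrt_of_sq_le (by linarith)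
  linarith

section NormedSpace

variable {E : Type*} [NormedAddCommGroup E] {x p : E} {N l v : ℝ}

/-- A majorant of `‖p‖ ^ 2 / ‖p - x‖` on the region `‖p‖ ^ 2 * ‖p - x‖ < l`, whose integral over a
plane is `O(l)` uniformly in `x`. The first term is for `‖p‖ ≤ 3 * ‖p - x‖`, the second for `p`
close to `x`. -/
noncomputable def sublevelMajorant (x : E) (l : ℝ) (p : E) : ℝ :=
  (ball 0 ((3 * l) ^ (3⁻¹ : ℝ))).indicator (fun q => 3 * ‖q‖) p +
    (ball x (16 / 9 * l / ‖x‖ ^ 2)).indicator (fun q => 9 / 4 * ‖x‖ ^ 2 * ‖q - x‖⁻¹) p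

lemma sublevelMajorant_nonneg (x : E) (l : ℝ) (p : E) : 0 ≤ sublevelMajorant x l p :=
  add_nonneg (Set.indicator_nonneg (fun _ _ => by positivity) _)
    (Set.indicator_nonneg (fun _ _ => by positivity) _)

lemma sq_norm_div_norm_sub_le_sublevelMajorant (h : ‖p‖ ^ 2 * ‖p - x‖ < l) :
    ‖p‖ ^ 2 / ‖p - x‖ ≤ sublevelMajorant x l p := by
  have hp := norm_nonneg p
  have hd := norm_nonneg (p - x)
  have hfar : 0 ≤ (ball 0 ((3 * l) ^ (3⁻¹ : ℝ))).indicator (fun q : E => 3 * ‖q‖) p :=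
    Set.indicator_nonneg (fun _ _ => by positivity) _
  have hnear : 0 ≤ (ball x (16 / 9 * l / ‖x‖ ^ 2)).indicator
      (fun q => 9 / 4 * ‖x‖ ^ 2 * ‖q - x‖⁻¹) p :=
    Set.indicator_nonneg (fun _ _ => by positivity) _
  rw [sublevelMajorant]
  rcases le_or_gt ‖p‖ (3 * ‖p - x‖) with hpd | hpd
  · have hmem : p ∈ ball 0 ((3 * l) ^ (3⁻¹ : ℝ)) := by
      rw [mem_ball_zero_iff]
      have hcube : ‖p‖ ^ (3 : ℝ) < 3 * l := by
        norm_cast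
        nlinarith [mul_le_mul_of_nonneg_left hpd (sq_nonneg ‖p‖)]
      exact (lt_rpow_inv_iff_of_pos hp ((rpow_nonneg hp _).trans hcube.le) three_pos).2 hcube
    rw [Set.indicator_of_mem hmem]
    exact le_add_of_le_of_nonneg (div_le_of_le_mul₀ hd (by positivity) (by nlinarith)) hnear
  · have hp_le : ‖p‖ ≤ 3 / 2 * ‖x‖ := by
      linarith [norm_le_norm_add_norm_sub' p x]
    have hx_le : 3 / 4 * ‖x‖ ≤ ‖p‖ := by
      linarith [norm_le_norm_add_norm_sub p x]
    have hx : 0 < ‖x‖ := by linarith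
    have hmem : p ∈ ball x (16 / 9 * l / ‖x‖ ^ 2) := by
      rw [mem_ball, dist_eq_norm, lt_div_iff₀ (by positivity)]
      nlinarith [pow_le_pow_left₀ (by positivity) hx_le 2]
    rw [Set.indicator_of_mem hmem, div_eq_mul_inv]
    refine le_add_of_nonneg_of_le hfar (mul_le_mul_of_nonneg_right ?_ (by positivity))
    linarith [pow_le_pow_left₀ hp hp_le 2]

lemma inv_norm_sub_mul_le (hl : 0 < l) (hN : 0 ≤ N) (hv : 0 ≤ v) (hvN : v ≤ N * ‖p‖ ^ 2) :
    ‖p - x‖⁻¹ * v ≤ ‖p‖ ^ 2 * v / l + N * sublevelMajorant x l p := by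
  have hd := norm_nonneg (p - x)
  rcases le_or_gt l (‖p‖ ^ 2 * ‖p - x‖) with h | h
  · have hd0 : 0 < ‖p - x‖ := hd.lt_of_ne' fun h0 => by simp [h0] at h; linarith
    refine le_add_of_le_of_nonneg ?_ (mul_nonneg hN (sublevelMajorant_nonneg x l p))
    rw [inv_mul_eq_div, div_le_div_iff₀ hd0 hl]
    nlinarith
  · refine le_add_of_nonneg_of_le (by positivity) ?_
    calc ‖p - x‖⁻¹ * v ≤ ‖p - x‖⁻¹ * (N * ‖p‖ ^ 2) := by gcongr
      _ = N * (‖p‖ ^ 2 / ‖p - x‖) := by ring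
      _ ≤ N * sublevelMajorant x l p := by
        gcongr
        exact sq_norm_div_norm_sub_le_sublevelMajorant h

variable [NormedSpace ℝ E] [FiniteDimensional ℝ E] [MeasurableSpace E] [BorelSpace E]

section Ball

variable (μ : Measure E) [μ.IsAddHaarMeasure] {α R : ℝ}

lemma setIntegral_ball_norm_sub_rpow [Nontrivial E] (hα : 0 < finrank ℝ E + α) (hR : 0 ≤ R)
    (x : E) :
    ∫ p in ball x R, ‖p - x‖ ^ α ∂μ =
      finrank ℝ E * μ.real (ball 0 1) * (R ^ (finrank ℝ E + α) / (finrank ℝ E + α)) := by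
  have hradial : ∫ y in Set.Ioi (0 : ℝ), y ^ (finrank ℝ E - 1) • (Set.Iio R).indicator (· ^ α) y =
      ∫ y in (0 : ℝ)..R, y ^ (finrank ℝ E + α - 1) := by
    rw [intervalIntegral.integral_of_le hR, integral_Ioc_eq_integral_Ioo, ← Set.Ioi_inter_Iio,
      ← setIntegral_indicator measurableSet_Iio]
    refine setIntegral_congr_fun measurableSet_Ioi fun y (hy : 0 < y) => ?_
    by_cases hyR : y < R
    · have hn : ((finrank ℝ E - 1 : ℕ) : ℝ) = finrank ℝ E - 1 := Nat.cast_pred finrank_pos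
      simp only [Set.mem_Iio, hyR, Set.indicator_of_mem, smul_eq_mul]
      rw [← rpow_natCast, hn, ← rpow_add hy, sub_add_eq_add_sub]
    · simp [hyR]
  calc ∫ p in ball x R, ‖p - x‖ ^ α ∂μ
      = ∫ p, (Set.Iio R).indicator (· ^ α) ‖p - x‖ ∂μ := by
        rw [← integral_indicator measurableSet_ball]
        simp [Set.indicator, dist_eq_norm]
    _ = ∫ p, (Set.Iio R).indicator (· ^ α) ‖p‖ ∂μ :=
        integral_sub_right_eq_self (fun p => (Set.Iio R).indicator (· ^ α) ‖p‖) x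
    _ = finrank ℝ E * μ.real (ball 0 1) * ∫ y in (0 : ℝ)..R, y ^ (finrank ℝ E + α - 1) := by
        rw [integral_fun_norm_addHaar, hradial, nsmul_eq_mul, smul_eq_mul, mul_assoc]
    _ = _ := by
        rw [integral_rpow (Or.inl (by linarith)), sub_add_cancel, zero_rpow hα.ne', sub_zero]

lemma integrableOn_ball_norm_sub_rpow [Nontrivial E] (hα : 0 < finrank ℝ E + α) (x : E) :
    IntegrableOn (fun p => ‖p - x‖ ^ α) (ball x R) μ := by
  have hcentered : IntegrableOn (fun p : E => ‖p‖ ^ α) (ball 0 R) μ := by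
    refine integrableOn_ball_of_norm_le_rpow (C := 1) (α := -α) finrank_pos (by linarith)
      (.of_forall fun p => ?_) (measurable_norm.pow_const α).aestronglyMeasurable
    rw [neg_neg, one_mul, norm_of_nonneg (by positivity)]
  have htranslated := (hcentered.integrable_indicator measurableSet_ball).comp_sub_right x
  rw [← integrable_indicator_iff measurableSet_ball]
  refine htranslated.congr (.of_forall fun p => ?_)
  simp [Set.indicator, dist_eq_norm]

lemma integrableOn_ball_norm (hE : finrank ℝ E = 2) :
    IntegrableOn (fun p : E => ‖p‖) (ball 0 R) μ := by
  have : Nontrivial E := nontrivial_of_finrank_eq_succ hE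
  simpa using integrableOn_ball_norm_sub_rpow μ (α := 1) (by positivity) (0 : E)

lemma setIntegral_ball_norm (hE : finrank ℝ E = 2) (hR : 0 ≤ R) :
    ∫ p in ball (0 : E) R, ‖p‖ ∂μ = 2 / 3 * μ.real (ball 0 1) * R ^ 3 := by
  have : Nontrivial E := nontrivial_of_finrank_eq_succ hE
  have h := setIntegral_ball_norm_sub_rpow μ (α := 1) (by positivity) hR (0 : E)
  simp only [sub_zero, rpow_one, hE, Nat.cast_ofNat, two_add_one_eq_three, rpow_ofNat] at h
  rw [h]
  ring

lemma integrableOn_ball_inv_norm_sub (hE : finrank ℝ E = 2) (x : E) :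
    IntegrableOn (fun p => ‖p - x‖⁻¹) (ball x R) μ := by
  have : Nontrivial E := nontrivial_of_finrank_eq_succ hE
  simpa only [rpow_neg_one] using
    integrableOn_ball_norm_sub_rpow μ (α := -1) (by norm_num [hE]) x

lemma setIntegral_ball_inv_norm_sub (hE : finrank ℝ E = 2) (hR : 0 ≤ R) (x : E) :
    ∫ p in ball x R, ‖p - x‖⁻¹ ∂μ = 2 * μ.real (ball 0 1) * R := by
  have : Nontrivial E := nontrivial_of_finrank_eq_succ hE
  have h := setIntegral_ball_norm_sub_rpow μ (α := -1) (by norm_num [hE]) hR x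
  simp only [rpow_neg_one, hE] at h
  norm_num at h
  exact h

end Ball

variable {μ ν : Measure E} [μ.IsAddHaarMeasure]

lemma integrable_sublevelMajorant (hE : finrank ℝ E = 2) (x : E) (l : ℝ) :
    Integrable (sublevelMajorant x l) μ :=
  (IntegrableOn.integrable_indicator ((integrableOn_ball_norm μ hE).const_mul 3)
    measurableSet_ball).add
  (IntegrableOn.integrable_indicator ((integrableOn_ball_inv_norm_sub μ hE x).const_mul _)
    measurableSet_ball)

lemma integral_sublevelMajorant_le (hE : finrank ℝ E = 2) (x : E) (hl : 0 ≤ l) :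
    ∫ p, sublevelMajorant x l p ∂μ ≤ 14 * μ.real (ball 0 1) * l := by
  have hcube : ((3 * l) ^ (3⁻¹ : ℝ)) ^ 3 = 3 * l := by
    rw [← rpow_natCast, ← rpow_mul (by positivity)]
    norm_num
  have hscale : ‖x‖ ^ 2 * (16 / 9 * l / ‖x‖ ^ 2) ≤ 16 / 9 * l := by
    rw [mul_div_left_comm]
    exact mul_le_of_le_one_right (by positivity) (div_self_le_one _)
  calc ∫ p, sublevelMajorant x l p ∂μ
      = (∫ p in ball 0 ((3 * l) ^ (3⁻¹ : ℝ)), 3 * ‖p‖ ∂μ) +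
          ∫ p in ball x (16 / 9 * l / ‖x‖ ^ 2), 9 / 4 * ‖x‖ ^ 2 * ‖p - x‖⁻¹ ∂μ := by
        rw [← integral_indicator measurableSet_ball, ← integral_indicator measurableSet_ball]
        refine integral_add ?_ ?_
        · exact IntegrableOn.integrable_indicator ((integrableOn_ball_norm μ hE).const_mul 3)
            measurableSet_ball
        · exact IntegrableOn.integrable_indicator
            ((integrableOn_ball_inv_norm_sub μ hE x).const_mul _) measurableSet_ball
    _ = 6 * μ.real (ball 0 1) * l +
          9 / 2 * μ.real (ball 0 1) * (‖x‖ ^ 2 * (16 / 9 * l / ‖x‖ ^ 2)) := by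
        rw [integral_const_mul, integral_const_mul, setIntegral_ball_norm μ hE (by positivity),
          setIntegral_ball_inv_norm_sub μ hE (by positivity) x, hcube]
        ring
    _ ≤ 6 * μ.real (ball 0 1) * l + 9 / 2 * μ.real (ball 0 1) * (16 / 9 * l) := by gcongr
    _ = _ := by ring

variable {F : Type*} [NormedAddCommGroup F] {w : E → F}

lemma integrable_inv_norm_sub_mul_norm (hE : finrank ℝ E = 2) (hν : ν ≤ μ) (hN : 0 ≤ N)
    (hw : AEStronglyMeasurable w ν) (hwN : ∀ᵐ p ∂ν, ‖w p‖ ≤ N * ‖p‖ ^ 2)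
    (hwI : Integrable (fun p => ‖p‖ ^ 2 * ‖w p‖) ν) (x : E) :
    Integrable (fun p => ‖p - x‖⁻¹ * ‖w p‖) ν := by
  have hmajorant := (hwI.div_const 1).add
    (((integrable_sublevelMajorant hE x 1).mono_measure hν).const_mul N)
  have hmeas : AEStronglyMeasurable (fun p => ‖p - x‖⁻¹ * ‖w p‖) ν :=
    (by fun_prop : Measurable fun p : E => ‖p - x‖⁻¹).aestronglyMeasurable.mul hw.norm
  refine hmajorant.mono' hmeas (hwN.mono fun p hp => ?_)
  rw [norm_of_nonneg (by positivity)]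
  exact inv_norm_sub_mul_le one_pos hN (norm_nonneg _) hp

lemma integral_inv_norm_sub_mul_norm_le (hE : finrank ℝ E = 2) (hν : ν ≤ μ) (hN : 0 ≤ N)
    (hwN : ∀ᵐ p ∂ν, ‖w p‖ ≤ N * ‖p‖ ^ 2)
    (hwI : Integrable (fun p => ‖p‖ ^ 2 * ‖w p‖) ν) (x : E) :
    ∫ p, ‖p - x‖⁻¹ * ‖w p‖ ∂ν ≤
      2 * √((∫ p, ‖p‖ ^ 2 * ‖w p‖ ∂ν) * (14 * μ.real (ball 0 1) * N)) := by
  refine le_two_mul_sqrt_of_forall_le_div_add_mul (integral_nonneg fun p => by positivity)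
    (by positivity) fun l hl => ?_
  have hM : Integrable (sublevelMajorant x l) μ := integrable_sublevelMajorant hE x l
  have hMν := hM.mono_measure hν
  calc ∫ p, ‖p - x‖⁻¹ * ‖w p‖ ∂ν
      ≤ ∫ p, (‖p‖ ^ 2 * ‖w p‖ / l + N * sublevelMajorant x l p) ∂ν := by
        refine integral_mono_of_nonneg (.of_forall fun p => by positivity)
          ((hwI.div_const l).add (hMν.const_mul N)) (hwN.mono fun p hp => ?_)
        exact inv_norm_sub_mul_le hl hN (norm_nonneg _) hp
    _ = (∫ p, ‖p‖ ^ 2 * ‖w p‖ ∂ν) / l + N * ∫ p, sublevelMajorant x l p ∂ν := by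
        rw [integral_add (hwI.div_const l) (hMν.const_mul N), integral_div, integral_const_mul]
    _ ≤ (∫ p, ‖p‖ ^ 2 * ‖w p‖ ∂ν) / l + N * ∫ p, sublevelMajorant x l p ∂μ := by
        exact add_le_add le_rfl (mul_le_mul_of_nonneg_left
          (integral_mono_measure hν (.of_forall (sublevelMajorant_nonneg x l)) hM) hN)
    _ ≤ (∫ p, ‖p‖ ^ 2 * ‖w p‖ ∂ν) / l + N * (14 * μ.real (ball 0 1) * l) := by
        gcongr
        exact integral_sublevelMajorant_le hE x hl.le
    _ = _ := by ring

end NormedSpace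

lemma sq_norm_le_sq_fst_add_sq_snd (p : ℝ × ℝ) : ‖p‖ ^ 2 ≤ p.1 ^ 2 + p.2 ^ 2 := by
  rcases max_choice ‖p.1‖ ‖p.2‖ with h | h <;> rw [Prod.norm_def, h, norm_eq_abs, sq_abs] <;>
    nlinarith [sq_nonneg p.1, sq_nonneg p.2]

lemma sq_fst_add_sq_snd_le_two_mul_sq_norm (p : ℝ × ℝ) : p.1 ^ 2 + p.2 ^ 2 ≤ 2 * ‖p‖ ^ 2 := by
  have h₁ := sq_le_sq' (neg_le_of_abs_le (norm_fst_le p)) (le_of_abs_le (norm_fst_le p))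
  have h₂ := sq_le_sq' (neg_le_of_abs_le (norm_snd_le p)) (le_of_abs_le (norm_snd_le p))
  linarith

lemma integrable_and_integral_le_of_lintegral_le {X : Type*} [MeasurableSpace X] {μ : Measure X}
    {f : X → ℝ} {I : ℝ} (hf : AEStronglyMeasurable f μ) (hf0 : 0 ≤ᵐ[μ] f) (hI : 0 ≤ I)
    (h : ∫⁻ x, ENNReal.ofReal (f x) ∂μ ≤ ENNReal.ofReal I) :
    Integrable f μ ∧ ∫ x, f x ∂μ ≤ I := by
  refine ⟨(lintegral_ofReal_ne_top_iff_integrable hf hf0).1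
    (ne_top_of_le_ne_top ENNReal.ofReal_ne_top h), ?_⟩
  rw [integral_eq_lintegral_of_nonneg_ae hf0 hf]
  exact ENNReal.toReal_le_of_le_ofReal hI h

lemma integrableOn_mul_and_abs_integral_mul_le {K w : ℝ × ℝ → ℝ} {Q : Set (ℝ × ℝ)} {c N I : ℝ}
    {x : ℝ × ℝ} (hc : 0 ≤ c) (hKm : AEStronglyMeasurable K (volume.restrict Q))
    (hK : ∀ᵐ p ∂volume.restrict Q, |K p| ≤ c * ‖p - x‖⁻¹)
    (hw : AEStronglyMeasurable w (volume.restrict Q)) (hN : 0 ≤ N) (hI : 0 ≤ I)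
    (hwN : ∀ᵐ p ∂volume.restrict Q, |w p| ≤ N * (p.1 ^ 2 + p.2 ^ 2))
    (hwI : ∫⁻ p in Q, ENNReal.ofReal ((p.1 ^ 2 + p.2 ^ 2) * |w p|) ≤ ENNReal.ofReal I) :
    IntegrableOn (fun p => K p * w p) Q ∧
      |∫ p in Q, K p * w p| ≤ c * (2 * √(28 * volume.real (ball (0 : ℝ × ℝ) 1))) * √I * √N := by
  have hdim : finrank ℝ (ℝ × ℝ) = 2 := by simp
  have hwN' : ∀ᵐ p ∂volume.restrict Q, ‖w p‖ ≤ 2 * N * ‖p‖ ^ 2 := hwN.mono fun p hp =>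
    hp.trans (by nlinarith [sq_fst_add_sq_snd_le_two_mul_sq_norm p])
  have hwI' : ∫⁻ p in Q, ENNReal.ofReal (‖p‖ ^ 2 * ‖w p‖) ≤ ENNReal.ofReal I := by
    refine le_trans (lintegral_mono fun p => ENNReal.ofReal_le_ofReal ?_) hwI
    exact mul_le_mul_of_nonneg_right (sq_norm_le_sq_fst_add_sq_snd p) (norm_nonneg _)
  obtain ⟨hmoment, hmoment_le⟩ := integrable_and_integral_le_of_lintegral_le
    (f := fun p => ‖p‖ ^ 2 * ‖w p‖) ((measurable_norm.pow_const 2).aestronglyMeasurable.mul hw.norm)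
    (.of_forall fun p => by positivity) hI hwI'
  have hbound := (integrable_inv_norm_sub_mul_norm hdim Measure.restrict_le_self (by positivity)
    hw hwN' hmoment x).const_mul c
  have hdom : ∀ᵐ p ∂volume.restrict Q, ‖K p * w p‖ ≤ c * (‖p - x‖⁻¹ * ‖w p‖) := hK.mono
    fun p hp => by
      rw [norm_mul, ← mul_assoc]
      exact mul_le_mul_of_nonneg_right hp (norm_nonneg _)
  refine ⟨hbound.mono' (hKm.mul hw) hdom, ?_⟩
  calc |∫ p in Q, K p * w p| ≤ c * ∫ p in Q, ‖p - x‖⁻¹ * ‖w p‖ :=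
        (norm_integral_le_of_norm_le hbound hdom).trans_eq (integral_const_mul _ _)
    _ ≤ c * (2 * √((∫ p in Q, ‖p‖ ^ 2 * ‖w p‖) *
          (14 * volume.real (ball (0 : ℝ × ℝ) 1) * (2 * N)))) := by
        gcongr
        exact integral_inv_norm_sub_mul_norm_le hdim Measure.restrict_le_self (by positivity)
          hwN' hmoment x
    _ ≤ c * (2 * √(I * (14 * volume.real (ball (0 : ℝ × ℝ) 1) * (2 * N)))) := by gcongr
    _ = c * (2 * √(28 * volume.real (ball (0 : ℝ × ℝ) 1) * I * N)) := by
        congr 3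
        ring
    _ = _ := by
        rw [sqrt_mul (by positivity), sqrt_mul (by positivity)]
        ring

/-! ### The Biot–Savart kernel -/

lemma intervalIntegrable_inv_affine_pow {e b T : ℝ} (he : 0 < e) (hb : 0 ≤ b) (hT : 0 ≤ T)
    (n : ℕ) : IntervalIntegrable (fun t => ((e + b * t) ^ n)⁻¹) volume 0 T := by
  refine ContinuousOn.intervalIntegrable_of_Icc hT (ContinuousOn.inv₀ (by fun_prop) fun t ht => ?_)
  have := mul_nonneg hb ht.1
  positivity

lemma mul_integral_inv_affine_pow_le {e b T : ℝ} {n : ℕ} (he : 0 < e) (hb : 0 ≤ b) (hT : 0 ≤ T)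
    (hn : n ≠ 0) : b * ∫ t in 0..T, ((e + b * t) ^ (n + 1))⁻¹ ≤ (n * e ^ n)⁻¹ := by
  have hbT : 0 < e + b * T := by positivity
  have hzpow : ∀ u : ℝ, (u ^ (n + 1))⁻¹ = u ^ (-((n : ℤ) + 1)) := fun u => by
    rw [zpow_neg]
    norm_cast
  calc b * ∫ t in 0..T, ((e + b * t) ^ (n + 1))⁻¹ = ∫ u in e..e + b * T, (u ^ (n + 1))⁻¹ := by
        simpa only [mul_zero, add_zero] using
          intervalIntegral.mul_integral_comp_add_mul
            (a := 0) (b := T) (f := fun u => (u ^ (n + 1))⁻¹) b e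
    _ = (n * e ^ n)⁻¹ - (n * (e + b * T) ^ n)⁻¹ := by
        simp_rw [hzpow]
        rw [integral_zpow (Or.inr ⟨by lia, fun h0 => (lt_min he hbT).not_ge h0.1⟩), neg_add_rev,
          neg_add_cancel_comm]
        push_cast
        rw [neg_add_cancel_comm, zpow_neg, zpow_neg, zpow_natCast, zpow_natCast]
        field_simp
        ring
    _ ≤ (n * e ^ n)⁻¹ := sub_le_self _ (by positivity)

lemma sq_add_mul_div_eight_le {r a d θ : ℝ} (hr : 0 ≤ r) (ha : 0 ≤ a) (hra : |r - a| ≤ d)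
    (hθ : θ ∈ Set.Icc 0 π) :
    ((d + a * θ) / 8) ^ 2 ≤ d ^ 2 + 2 * r * a * (1 - cos θ) := by
  have hcos_le := cos_le_one θ
  have hd : 0 ≤ d := (abs_nonneg _).trans hra
  have haθ : 0 ≤ a * θ := mul_nonneg ha hθ.1
  rcases le_or_gt a (2 * r) with har | har
  · have hcos : θ ^ 2 / 8 ≤ 1 - cos θ := by
      have hjordan := cos_le_one_sub_mul_cos_sq (abs_le.2 ⟨by linarith [hθ.1, pi_pos], hθ.2⟩)
      have hpi : 1 / 8 ≤ 2 / π ^ 2 := by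
        rw [div_le_div_iff₀ (by norm_num) (by positivity)]
        nlinarith [pi_lt_d2, pi_pos]
      linarith [mul_le_mul_of_nonneg_right hpi (sq_nonneg θ)]
    have hangle : a ^ 2 * (θ ^ 2 / 8) ≤ 2 * r * a * (1 - cos θ) :=
      mul_le_mul (by nlinarith) hcos (by positivity) (by positivity)
    nlinarith [sq_nonneg (d - a * θ)]
  · have had : a ≤ 2 * d := by linarith [neg_le_of_abs_le hra]
    have haθd : a * θ ≤ 2 * d * 3.15 :=
      mul_le_mul had (hθ.2.trans pi_lt_d2.le) hθ.1 (by positivity)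
    have hangle : 0 ≤ 2 * r * a * (1 - cos θ) := mul_nonneg (by positivity) (by linarith)
    linarith [pow_le_pow_left₀ (by positivity) (by linarith : (d + a * θ) / 8 ≤ d) 2]

section Kernel

variable {r s rb sb θ φ : ℝ}

lemma norm_add_mul_add_mul_div_le_sqrt_Xmm (hr : 0 ≤ r) (hs : 0 ≤ s) (hrb : 0 ≤ rb) (hsb : 0 ≤ sb)
    (hθ : θ ∈ Set.Icc 0 π) (hφ : φ ∈ Set.Icc 0 π) :
    (‖(rb - r, sb - s)‖ + rb * θ + sb * φ) / 16 ≤ √(Xmm r s rb sb θ φ) := by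
  set d := ‖(rb - r, sb - s)‖
  have hd : d ^ 2 ≤ (rb - r) ^ 2 + (sb - s) ^ 2 := sq_norm_le_sq_fst_add_sq_snd _
  have hr_angle : 0 ≤ 2 * r * rb * (1 - cos θ) :=
    mul_nonneg (by positivity) (by linarith [cos_le_one θ])
  have hs_angle : 0 ≤ 2 * s * sb * (1 - cos φ) :=
    mul_nonneg (by positivity) (by linarith [cos_le_one φ])
  have hθ_le : (d + rb * θ) / 8 ≤ √(Xmm r s rb sb θ φ) := by
    have hdr : |r - rb| ≤ d := abs_sub_comm r rb ▸ norm_fst_le (rb - r, sb - s)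
    refine le_sqrt_of_sq_le ((sq_add_mul_div_eight_le hr hrb hdr hθ).trans ?_)
    rw [Xmm]
    linarith
  have hφ_le : (d + sb * φ) / 8 ≤ √(Xmm r s rb sb θ φ) := by
    have hds : |s - sb| ≤ d := abs_sub_comm s sb ▸ norm_snd_le (rb - r, sb - s)
    refine le_sqrt_of_sq_le ((sq_add_mul_div_eight_le hs hsb hds hφ).trans ?_)
    rw [Xmm]
    linarith
  have hd0 : 0 ≤ d := norm_nonneg _
  linarith

lemma abs_sub_mul_cos_le_sqrt_Xmm (hr : 0 ≤ r) (hrb : 0 ≤ rb) (s sb θ φ : ℝ) :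
    |sb - s * cos φ| ≤ √(Xmm r s rb sb θ φ) := by
  have hangle : 0 ≤ 2 * r * rb * (1 - cos θ) :=
    mul_nonneg (by positivity) (by linarith [cos_le_one θ])
  refine abs_le_sqrt ?_
  rw [Xmm]
  nlinarith [sq_nonneg (r - rb), mul_nonneg (sq_nonneg s) (sub_nonneg.2 (cos_sq_le_one φ))]

lemma norm_kernel_integrand_le (hr : 0 ≤ r) (hs : 0 ≤ s) (hrb : 0 ≤ rb) (hsb : 0 ≤ sb)
    (hne : (rb, sb) ≠ (r, s)) (hθ : θ ∈ Set.Icc 0 π) (hφ : φ ∈ Set.Icc 0 π) :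
    ‖rb * sb * cos θ * (sb - s * cos φ) / (Xmm r s rb sb θ φ) ^ 2‖ ≤
      4096 * rb * (sb * ((‖(rb - r, sb - s)‖ + rb * θ + sb * φ) ^ 3)⁻¹) := by
  have hd : 0 < ‖(rb - r, sb - s)‖ := norm_pos_iff.2 (sub_ne_zero.2 hne)
  have hlower := norm_add_mul_add_mul_div_le_sqrt_Xmm hr hs hrb hsb hθ hφ
  have hnum := abs_sub_mul_cos_le_sqrt_Xmm hr hrb s sb θ φ
  set X := Xmm r s rb sb θ φ
  set u := ‖(rb - r, sb - s)‖ + rb * θ + sb * φ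
  have hu : 0 < u := by
    have := hθ.1
    have := hφ.1
    positivity
  have hX : 0 < √X := (by positivity : 0 < u / 16).trans_le hlower
  calc ‖rb * sb * cos θ * (sb - s * cos φ) / X ^ 2‖
      = rb * sb * |cos θ| * |sb - s * cos φ| / X ^ 2 := by
        simp only [norm_div, norm_mul, norm_pow, norm_eq_abs, abs_of_nonneg hrb, abs_of_nonneg hsb,
          sq_abs]
    _ ≤ rb * sb * 1 * √X / X ^ 2 := by
        gcongr
        exact abs_cos_le_one θ
    _ = rb * sb * (√X ^ 3)⁻¹ := by
        have hX2 : X ^ 2 = √X ^ 4 := by rw [pow_mul √X 2 2, sq_sqrt (sqrt_pos.1 hX).le]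
        rw [hX2]
        field_simp
    _ ≤ rb * sb * ((u / 16) ^ 3)⁻¹ := by gcongr
    _ = _ := by
        field_simp
        norm_num

lemma norm_integral_kernel_integrand_le (hr : 0 ≤ r) (hs : 0 ≤ s) (hrb : 0 ≤ rb) (hsb : 0 ≤ sb)
    (hne : (rb, sb) ≠ (r, s)) (hθ : θ ∈ Set.Icc 0 π) :
    ‖∫ φ in 0..π, rb * sb * cos θ * (sb - s * cos φ) / (Xmm r s rb sb θ φ) ^ 2‖ ≤
      2048 * (rb * ((‖(rb - r, sb - s)‖ + rb * θ) ^ 2)⁻¹) := by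
  have hd : 0 < ‖(rb - r, sb - s)‖ := norm_pos_iff.2 (sub_ne_zero.2 hne)
  have he : 0 < ‖(rb - r, sb - s)‖ + rb * θ := add_pos_of_pos_of_nonneg hd (mul_nonneg hrb hθ.1)
  calc _ ≤ ∫ φ in 0..π, 4096 * rb * (sb * ((‖(rb - r, sb - s)‖ + rb * θ + sb * φ) ^ 3)⁻¹) :=
        intervalIntegral.norm_integral_le_of_norm_le pi_pos.le
          (.of_forall fun φ hφ => norm_kernel_integrand_le hr hs hrb hsb hne hθ
            (Set.Ioc_subset_Icc_self hφ))
          (((intervalIntegrable_inv_affine_pow he hsb pi_pos.le 3).const_mul sb).const_mul _)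
    _ = 4096 * rb * (sb * ∫ φ in 0..π, ((‖(rb - r, sb - s)‖ + rb * θ + sb * φ) ^ 3)⁻¹) := by
        simp only [intervalIntegral.integral_const_mul]
    _ ≤ 4096 * rb * (2 * (‖(rb - r, sb - s)‖ + rb * θ) ^ 2)⁻¹ := by
        gcongr
        exact mul_integral_inv_affine_pow_le he hsb pi_pos.le two_ne_zero
    _ = _ := by
        rw [mul_inv]
        ring

lemma abs_Fr_le (hr : 0 ≤ r) (hs : 0 ≤ s) (hrb : 0 ≤ rb) (hsb : 0 ≤ sb)
    (hne : (rb, sb) ≠ (r, s)) : |Fr r s rb sb| ≤ 2048 * ‖(rb - r, sb - s)‖⁻¹ := by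
  have hd : 0 < ‖(rb - r, sb - s)‖ := norm_pos_iff.2 (sub_ne_zero.2 hne)
  have hpi : 2 / π ^ 2 ≤ 1 := (div_le_one (by positivity)).2 (by nlinarith [pi_gt_three])
  rw [Fr, abs_mul, abs_of_nonneg (by positivity)]
  calc _ ≤ 1 * ∫ θ in 0..π, 2048 * (rb * ((‖(rb - r, sb - s)‖ + rb * θ) ^ 2)⁻¹) := by
        refine mul_le_mul hpi ?_ (abs_nonneg _) zero_le_one
        exact intervalIntegral.norm_integral_le_of_norm_le pi_pos.le
          (.of_forall fun θ hθ => norm_integral_kernel_integrand_le hr hs hrb hsb hne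
            (Set.Ioc_subset_Icc_self hθ))
          (((intervalIntegrable_inv_affine_pow hd hrb pi_pos.le 2).const_mul rb).const_mul _)
    _ = 2048 * (rb * ∫ θ in 0..π, ((‖(rb - r, sb - s)‖ + rb * θ) ^ 2)⁻¹) := by
        simp only [intervalIntegral.integral_const_mul, one_mul]
    _ ≤ 2048 * ‖(rb - r, sb - s)‖⁻¹ := by
        gcongr
        simpa using mul_integral_inv_affine_pow_le hd hrb pi_pos.le one_ne_zero

lemma abs_Fs_le (hr : 0 ≤ r) (hs : 0 ≤ s) (hrb : 0 ≤ rb) (hsb : 0 ≤ sb)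
    (hne : (rb, sb) ≠ (r, s)) : |Fs r s rb sb| ≤ 2048 * ‖(rb - r, sb - s)‖⁻¹ := by
  rw [Prod.norm_mk, max_comm]
  exact abs_Fr_le hs hr hsb hrb fun h => hne (Prod.swap_injective h)

lemma measurable_Fr (r s : ℝ) : Measurable fun p : ℝ × ℝ => Fr r s p.1 p.2 := by
  unfold Fr Xmm
  simp_rw [intervalIntegral.integral_of_le pi_pos.le]
  refine Measurable.const_mul ?_ _
  refine (StronglyMeasurable.integral_prod_right ?_).measurable
  refine StronglyMeasurable.integral_prod_right (α := (ℝ × ℝ) × ℝ)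
    (f := fun q φ => q.1.1 * q.1.2 * cos q.2 * (q.1.2 - s * cos φ) /
      ((r - q.1.1) ^ 2 + (s - q.1.2) ^ 2 + 2 * r * q.1.1 * (1 - cos q.2) +
        2 * s * q.1.2 * (1 - cos φ)) ^ 2) ?_
  exact Measurable.stronglyMeasurable (by unfold Function.uncurry; fun_prop)

lemma measurable_Fs (r s : ℝ) : Measurable fun p : ℝ × ℝ => Fs r s p.1 p.2 :=
  (measurable_Fr s r).comp measurable_swap

lemma ae_mem_quadrant_and_ne (x : ℝ × ℝ) : ∀ᵐ p ∂volume.restrict quadrant, p ∈ quadrant ∧ p ≠ x :=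
  (ae_restrict_mem (measurableSet_Ici.prod measurableSet_Ici)).and
    (ae_restrict_of_ae (Measure.ae_ne volume x))

end Kernel

theorem stmt_7_general :
    ∃ C : ℝ, 0 < C ∧
      ∀ (w : ℝ × ℝ → ℝ) (N I : ℝ),
        AEStronglyMeasurable w (volume.restrict quadrant) → 0 ≤ N → 0 ≤ I →
        (∀ᵐ p ∂(volume.restrict quadrant), |w p| ≤ N * (p.1 ^ 2 + p.2 ^ 2)) →
        (∫⁻ p in quadrant, ENNReal.ofReal ((p.1 ^ 2 + p.2 ^ 2) * |w p|)) ≤ ENNReal.ofReal I →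
        ∀ r s : ℝ, 0 ≤ r → 0 ≤ s →
          IntegrableOn (fun p : ℝ × ℝ => Fr r s p.1 p.2 * w p) quadrant ∧
          IntegrableOn (fun p : ℝ × ℝ => Fs r s p.1 p.2 * w p) quadrant ∧
          |uR w r s| ≤ C * √I * √N ∧
          |uS w r s| ≤ C * √I * √N := by
  have hV : 0 < volume.real (ball (0 : ℝ × ℝ) 1) :=
    ENNReal.toReal_pos (measure_ball_pos volume 0 one_pos).ne' measure_ball_lt_top.ne
  refine ⟨2048 * (2 * √(28 * volume.real (ball (0 : ℝ × ℝ) 1))), by positivity, ?_⟩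
  intro w N I hw hN hI hwN hwI r s hr hs
  have hFr := integrableOn_mul_and_abs_integral_mul_le (K := fun p => Fr r s p.1 p.2) (x := (r, s))
    (c := 2048) (by norm_num) (measurable_Fr r s).aestronglyMeasurable
    ((ae_mem_quadrant_and_ne (r, s)).mono fun p hp => abs_Fr_le hr hs hp.1.1 hp.1.2 hp.2)
    hw hN hI hwN hwI
  have hFs := integrableOn_mul_and_abs_integral_mul_le (K := fun p => Fs r s p.1 p.2) (x := (r, s))
    (c := 2048) (by norm_num) (measurable_Fs r s).aestronglyMeasurable
    ((ae_mem_quadrant_and_ne (r, s)).mono fun p hp => abs_Fs_le hr hs hp.1.1 hp.1.2 hp.2)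
    hw hN hI hwN hwI
  exact ⟨hFr.1, hFs.1, by simpa only [uR, abs_neg] using hFr.2, hFs.2⟩

/-- There is an absolute constant `C > 0` such that: if `w` is measurable,
`|w(r̄,s̄)| ≤ N r̄ s̄` a.e. on `Π`, and `∫∫_Π (r̄² + s̄²)|w| = I < ∞`, then for every
`(r,s) ∈ Π` with `r² + s² = 1` the integrals defining `u^r[w](r,s)` and `u^s[w](r,s)`
converge absolutely, and `|u^r[w](r,s)| ≤ C I^{1/2} N^{1/2}`,
`|u^s[w](r,s)| ≤ C I^{1/2} N^{1/2}`. -/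
theorem stmt_7 :
    ∃ C : ℝ, 0 < C ∧
      ∀ (w : ℝ × ℝ → ℝ) (N I : ℝ), Measurable w → 0 ≤ N → 0 ≤ I →
        (∀ᵐ p ∂(volume.restrict quadrant), |w p| ≤ N * (p.1 * p.2)) →
        (∫⁻ p in quadrant, ENNReal.ofReal ((p.1 ^ 2 + p.2 ^ 2) * |w p|))
          = ENNReal.ofReal I →
        ∀ r s : ℝ, 0 ≤ r → 0 ≤ s → r ^ 2 + s ^ 2 = 1 →
          IntegrableOn (fun p : ℝ × ℝ => Fr r s p.1 p.2 * w p) quadrant ∧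
          IntegrableOn (fun p : ℝ × ℝ => Fs r s p.1 p.2 * w p) quadrant ∧
          |uR w r s| ≤ C * Real.sqrt I * Real.sqrt N ∧
          |uS w r s| ≤ C * Real.sqrt I * Real.sqrt N := by
  obtain ⟨C, hC, h⟩ := stmt_7_general
  exact ⟨C, hC, fun w N I hw hN hI hwN hwI r s hr hs _ => h w N I hw.aestronglyMeasurable hN hI
    (hwN.mono fun p hp => hp.trans (mul_le_mul_of_nonneg_left
      (by nlinarith [sq_nonneg (p.1 - p.2), sq_nonneg (p.1 + p.2)]) hN)) hwI.le r s hr hs⟩
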